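/- Metric uncertainty relations compose under tensor products with additive error: if {U^{(1)}_{k₁}}_{k₁∈[t₁]} satisfies an ε-metric uncertainty relation on A₁ (acting on A₁⊗B₁) and {U^{(2)}_{k₂}}_{k₂∈[t₂]} satisfies an ε-metric uncertainty relation on A₂ (acting on A₂⊗B₂), then the family {U^{(1)}_{k₁} ⊗ U^{(2)}_{k₂}} satisfies a 2ε-metric uncertainty relation on A₁ ⊗ A₂. -/

import Mathlib

open scoped BigOperators Kronecker

lemma hom_aux {dA dB t : ℕ} (ht : 0 < t) (ε : ℝ)
    (U : Fin t → Matrix (Fin dA × Fin dB) (Fin dA × Fin dB) ℂ)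
    (h : ∀ ψ : EuclideanSpace ℂ (Fin dA × Fin dB), ‖ψ‖ = 1 →
      (1 / (t : ℝ)) * ∑ k, (1 / 2) * ∑ a : Fin dA,
          |(∑ b : Fin dB, ‖(U k).mulVec ψ (a, b)‖ ^ 2) - 1 / (dA : ℝ)| ≤ ε)
    (v : Fin dA × Fin dB → ℂ) :
    ∑ k, ∑ a : Fin dA, |(∑ b : Fin dB, ‖(U k).mulVec v (a, b)‖ ^ 2)
      - (∑ x, ‖v x‖ ^ 2) * (1 / (dA : ℝ))| ≤ 2 * t * ε * ∑ x, ‖v x‖ ^ 2 := by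
  set s : ℝ := ∑ x, ‖v x‖ ^ 2 with hs
  have hs0 : 0 ≤ s := Finset.sum_nonneg fun x _ => by positivity
  rcases hs0.eq_or_lt with h0 | hpos
  · have hv : v = 0 := by
      funext x
      have := (Finset.sum_eq_zero_iff_of_nonneg (fun x _ => by positivity)).1 (hs.symm.trans h0.symm) x (Finset.mem_univ x)
      simpa using this
    rw [← h0]
    simp [hv]
  · have hr : 0 < Real.sqrt s := Real.sqrt_pos.2 hpos
    set c : ℂ := (((Real.sqrt s)⁻¹ : ℝ) : ℂ) with hc
    have hcn : ‖c‖ ^ 2 = s⁻¹ := by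
      rw [hc, Complex.norm_real, Real.norm_eq_abs, sq_abs, inv_pow, Real.sq_sqrt hs0]
    have hn : ‖WithLp.toLp 2 (c • v)‖ = 1 := by
      rw [EuclideanSpace.norm_eq]
      simp only [Pi.smul_apply, smul_eq_mul, norm_mul, mul_pow, ← Finset.mul_sum, hcn, ← hs]
      rw [inv_mul_cancel₀ hpos.ne', Real.sqrt_one]
    have h1 := h _ hn
    have h2 : ∀ k a, |(∑ b : Fin dB, ‖(U k).mulVec (WithLp.toLp 2 (c • v)) (a, b)‖ ^ 2) - 1 / (dA : ℝ)|
        = s⁻¹ * |(∑ b : Fin dB, ‖(U k).mulVec v (a, b)‖ ^ 2) - s * (1 / (dA : ℝ))| := by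
      intro k a
      have e : ∑ b : Fin dB, ‖(U k).mulVec (WithLp.toLp 2 (c • v)) (a, b)‖ ^ 2 =
          s⁻¹ * ∑ b : Fin dB, ‖(U k).mulVec v (a, b)‖ ^ 2 := by
        simp only [Matrix.mulVec_smul, Pi.smul_apply, smul_eq_mul, norm_mul, mul_pow, ← Finset.mul_sum, hcn]
      rw [e]
      nth_rewrite 2 [← abs_of_pos (inv_pos.2 hpos)]
      rw [← abs_mul, mul_sub, inv_mul_cancel_left₀ hpos.ne']
    simp only [h2, ← Finset.mul_sum] at h1
    have ht' : (0 : ℝ) < t := by exact_mod_cast ht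
    set S := ∑ k, ∑ a : Fin dA, |(∑ b : Fin dB, ‖(U k).mulVec v (a, b)‖ ^ 2) - s * (1 / (dA : ℝ))|
    have h3 : S = 2 * t * s * (1 / (t : ℝ) * (1 / 2 * (s⁻¹ * S))) := by field_simp
    rw [h3]
    calc _ ≤ 2 * t * s * ε := by gcongr
      _ = _ := by ring

lemma unit_aux {n : Type*} [Fintype n] [DecidableEq n] (U : Matrix n n ℂ)
    (hU : U ∈ Matrix.unitaryGroup n ℂ) (v : n → ℂ) :
    ∑ x, ‖U.mulVec v x‖ ^ 2 = ∑ x, ‖v x‖ ^ 2 := by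
  have key : ∀ w : n → ℂ, ((∑ x, ‖w x‖ ^ 2 : ℝ) : ℂ) = dotProduct (star w) w := by
    intro w
    simp [dotProduct, Complex.conj_mul']
  have : ((∑ x, ‖U.mulVec v x‖ ^ 2 : ℝ) : ℂ) = ((∑ x, ‖v x‖ ^ 2 : ℝ) : ℂ) := by
    rw [key, key, Matrix.star_mulVec, Matrix.dotProduct_mulVec, Matrix.vecMul_vecMul,
      ← Matrix.star_eq_conjTranspose, (Matrix.mem_unitaryGroup_iff').1 hU, Matrix.vecMul_one]
  exact_mod_cast this



/-- (Parallel composition) If `{U¹_{k₁}}` on `A₁⊗B₁` satisfies an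
`ε`-metric uncertainty relation on `A₁` and `{U²_{k₂}}` on `A₂⊗B₂` satisfies an
`ε`-metric uncertainty relation on `A₂`, then the family of tensor products
`{U¹_{k₁} ⊗ U²_{k₂}}` satisfies a `2ε`-metric uncertainty relation on `A₁ ⊗ A₂`. -/
theorem stmt9 (dA1 dB1 dA2 dB2 t1 t2 : ℕ)
    (hA1 : 0 < dA1) (hB1 : 0 < dB1) (hA2 : 0 < dA2) (hB2 : 0 < dB2)
    (ht1 : 0 < t1) (ht2 : 0 < t2) (ε : ℝ) (hε : 0 ≤ ε)
    (U1 : Fin t1 → Matrix (Fin dA1 × Fin dB1) (Fin dA1 × Fin dB1) ℂ)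
    (U2 : Fin t2 → Matrix (Fin dA2 × Fin dB2) (Fin dA2 × Fin dB2) ℂ)
    (hU1 : ∀ k, U1 k ∈ Matrix.unitaryGroup (Fin dA1 × Fin dB1) ℂ)
    (hU2 : ∀ k, U2 k ∈ Matrix.unitaryGroup (Fin dA2 × Fin dB2) ℂ)
    (hMUR1 : ∀ ψ : EuclideanSpace ℂ (Fin dA1 × Fin dB1), ‖ψ‖ = 1 →
      (1 / (t1 : ℝ)) * ∑ k1, (1 / 2) * ∑ a1 : Fin dA1,
          |(∑ b1 : Fin dB1, ‖(U1 k1).mulVec ψ (a1, b1)‖ ^ 2) - 1 / (dA1 : ℝ)| ≤ ε)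
    (hMUR2 : ∀ ψ : EuclideanSpace ℂ (Fin dA2 × Fin dB2), ‖ψ‖ = 1 →
      (1 / (t2 : ℝ)) * ∑ k2, (1 / 2) * ∑ a2 : Fin dA2,
          |(∑ b2 : Fin dB2, ‖(U2 k2).mulVec ψ (a2, b2)‖ ^ 2) - 1 / (dA2 : ℝ)| ≤ ε) :
    ∀ ψ : EuclideanSpace ℂ ((Fin dA1 × Fin dB1) × (Fin dA2 × Fin dB2)), ‖ψ‖ = 1 →
      (1 / ((t1 : ℝ) * t2)) * ∑ k1, ∑ k2, (1 / 2) *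
          ∑ a1 : Fin dA1, ∑ a2 : Fin dA2,
            |(∑ b1 : Fin dB1, ∑ b2 : Fin dB2,
                ‖(U1 k1 ⊗ₖ U2 k2).mulVec ψ ((a1, b1), (a2, b2))‖ ^ 2)
              - 1 / ((dA1 : ℝ) * dA2)| ≤ 2 * ε := by
  intro ψ hψ
  have hψ1 : ∑ i, ∑ j, ‖ψ (i, j)‖ ^ 2 = 1 := by
    rw [← Fintype.sum_prod_type' (f := fun i j => ‖ψ (i, j)‖ ^ 2), ← EuclideanSpace.norm_sq_eq, hψ]
    norm_num
  have hψ2 : ∑ j, ∑ i, ‖ψ (i, j)‖ ^ 2 = 1 := by rw [Finset.sum_comm, hψ1]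
  -- partial application of the first family
  let φ : Fin t1 → (Fin dA1 × Fin dB1) → (Fin dA2 × Fin dB2) → ℂ :=
    fun k x j => (U1 k).mulVec (fun i => ψ (i, j)) x
  have hφ : ∀ k1 k2 x y, (U1 k1 ⊗ₖ U2 k2).mulVec ψ (x, y) = (U2 k2).mulVec (φ k1 x) y := by
    intro k1 k2 x y
    simp only [φ, Matrix.mulVec, dotProduct, Matrix.kroneckerMap_apply,
      Finset.mul_sum]
    rw [Fintype.sum_prod_type, Finset.sum_comm]
    refine Finset.sum_congr rfl fun j _ => Finset.sum_congr rfl fun i _ => by ring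
  have hφn : ∀ k1, ∑ x, ∑ j, ‖φ k1 x j‖ ^ 2 = 1 := by
    intro k1
    rw [Finset.sum_comm, ← hψ2]
    exact Finset.sum_congr rfl fun j _ => unit_aux _ (hU1 k1) _
  let n : Fin t1 → Fin dA1 → Fin dB1 → ℝ := fun k a b => ∑ j, ‖φ k (a, b) j‖ ^ 2
  have hd2 : (0 : ℝ) < dA2 := by exact_mod_cast hA2
  have hp1 : (0 : ℝ) < t1 := by exact_mod_cast ht1
  have hp2 : (0 : ℝ) < t2 := by exact_mod_cast ht2
  have pt : ∀ k1 k2 a1 a2, |(∑ b1 : Fin dB1, ∑ b2 : Fin dB2,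
        ‖(U1 k1 ⊗ₖ U2 k2).mulVec ψ ((a1, b1), (a2, b2))‖ ^ 2) - 1 / ((dA1 : ℝ) * dA2)|
      ≤ (∑ b1, |(∑ b2, ‖(U2 k2).mulVec (φ k1 (a1, b1)) (a2, b2)‖ ^ 2) - n k1 a1 b1 * (1 / (dA2 : ℝ))|)
        + |(∑ b1, n k1 a1 b1) - 1 / (dA1 : ℝ)| * (1 / (dA2 : ℝ)) := by
    intro k1 k2 a1 a2
    have e : (∑ b1 : Fin dB1, ∑ b2 : Fin dB2,
        ‖(U1 k1 ⊗ₖ U2 k2).mulVec ψ ((a1, b1), (a2, b2))‖ ^ 2) - 1 / ((dA1 : ℝ) * dA2)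
      = (∑ b1, ((∑ b2, ‖(U2 k2).mulVec (φ k1 (a1, b1)) (a2, b2)‖ ^ 2) - n k1 a1 b1 * (1 / (dA2 : ℝ))))
        + ((∑ b1, n k1 a1 b1) - 1 / (dA1 : ℝ)) * (1 / (dA2 : ℝ)) := by
      simp only [hφ, Finset.sum_sub_distrib, ← Finset.sum_mul]
      ring
    rw [e]
    refine (abs_add_le _ _).trans (add_le_add (Finset.abs_sum_le_sum_abs _ _) ?_)
    rw [abs_mul, abs_of_pos (one_div_pos.2 hd2)]
  -- first error term
  have T1 : ∀ k1, ∑ k2, ∑ a1, ∑ a2, ∑ b1,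
      |(∑ b2, ‖(U2 k2).mulVec (φ k1 (a1, b1)) (a2, b2)‖ ^ 2) - n k1 a1 b1 * (1 / (dA2 : ℝ))|
      ≤ 2 * t2 * ε := by
    intro k1
    calc _ = ∑ a1, ∑ b1, ∑ k2, ∑ a2,
        |(∑ b2, ‖(U2 k2).mulVec (φ k1 (a1, b1)) (a2, b2)‖ ^ 2) - n k1 a1 b1 * (1 / (dA2 : ℝ))| := by
          rw [Finset.sum_comm]
          refine Finset.sum_congr rfl fun a1 _ => ?_
          rw [Finset.sum_comm (s := (Finset.univ : Finset (Fin dB1)))]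
          refine Finset.sum_congr rfl fun k2 _ => ?_
          rw [Finset.sum_comm]
      _ ≤ ∑ a1, ∑ b1, 2 * t2 * ε * n k1 a1 b1 := by
          refine Finset.sum_le_sum fun a1 _ => Finset.sum_le_sum fun b1 _ => ?_
          exact hom_aux ht2 ε U2 hMUR2 (φ k1 (a1, b1))
      _ = 2 * t2 * ε := by
          have := hφn k1
          rw [Fintype.sum_prod_type] at this
          simp only [← Finset.mul_sum]
          rw [this, mul_one]
  -- second error term
  have T2 : ∑ k1, ∑ a1, |(∑ b1, n k1 a1 b1) - 1 / (dA1 : ℝ)| ≤ 2 * t1 * ε := by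
    calc _ ≤ ∑ k1, ∑ a1, ∑ j, |(∑ b1, ‖(U1 k1).mulVec (fun i => ψ (i, j)) (a1, b1)‖ ^ 2)
            - (∑ i, ‖ψ (i, j)‖ ^ 2) * (1 / (dA1 : ℝ))| := by
          refine Finset.sum_le_sum fun k1 _ => Finset.sum_le_sum fun a1 _ => ?_
          have e : (∑ b1, n k1 a1 b1) - 1 / (dA1 : ℝ) =
              ∑ j, ((∑ b1, ‖(U1 k1).mulVec (fun i => ψ (i, j)) (a1, b1)‖ ^ 2)
            - (∑ i, ‖ψ (i, j)‖ ^ 2) * (1 / (dA1 : ℝ))) := by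
            rw [Finset.sum_sub_distrib, ← Finset.sum_mul, hψ2, one_mul, Finset.sum_comm]
          rw [e]
          exact Finset.abs_sum_le_sum_abs _ _
      _ = ∑ j, ∑ k1, ∑ a1, |(∑ b1, ‖(U1 k1).mulVec (fun i => ψ (i, j)) (a1, b1)‖ ^ 2)
            - (∑ i, ‖ψ (i, j)‖ ^ 2) * (1 / (dA1 : ℝ))| := by
          rw [Finset.sum_comm (s := (Finset.univ : Finset (Fin dA2 × Fin dB2)))]
          refine Finset.sum_congr rfl fun k1 _ => ?_
          rw [Finset.sum_comm]
      _ ≤ ∑ j, 2 * t1 * ε * ∑ i, ‖ψ (i, j)‖ ^ 2 :=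
          Finset.sum_le_sum fun j _ => hom_aux ht1 ε U1 hMUR1 (fun i => ψ (i, j))
      _ = 2 * t1 * ε := by rw [← Finset.mul_sum, hψ2, mul_one]
  have total : ∑ k1, ∑ k2, ∑ a1 : Fin dA1, ∑ a2 : Fin dA2,
            |(∑ b1 : Fin dB1, ∑ b2 : Fin dB2,
                ‖(U1 k1 ⊗ₖ U2 k2).mulVec ψ ((a1, b1), (a2, b2))‖ ^ 2)
              - 1 / ((dA1 : ℝ) * dA2)| ≤ 4 * t1 * t2 * ε := by
    calc _ ≤ ∑ k1, (2 * t2 * ε + t2 * ∑ a1, |(∑ b1, n k1 a1 b1) - 1 / (dA1 : ℝ)|) := by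
          refine Finset.sum_le_sum fun k1 _ => ?_
          refine (Finset.sum_le_sum fun k2 _ => Finset.sum_le_sum fun a1 _ =>
            Finset.sum_le_sum fun a2 _ => pt k1 k2 a1 a2).trans ?_
          simp only [Finset.sum_add_distrib]
          refine add_le_add (T1 k1) (le_of_eq ?_)
          simp only [Finset.sum_const, Finset.card_univ, Fintype.card_fin, nsmul_eq_mul]
          congr 1
          refine Finset.sum_congr rfl fun a1 _ => ?_
          field_simp
      _ = t1 * (2 * t2 * ε) + t2 * ∑ k1, ∑ a1, |(∑ b1, n k1 a1 b1) - 1 / (dA1 : ℝ)| := by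
          rw [Finset.sum_add_distrib, Finset.sum_const, ← Finset.mul_sum]
          simp
      _ ≤ t1 * (2 * t2 * ε) + t2 * (2 * t1 * ε) := by gcongr
      _ = _ := by ring
  simp only [← Finset.mul_sum]
  calc _ ≤ 1 / ((t1 : ℝ) * t2) * (1 / 2 * (4 * t1 * t2 * ε)) := by gcongr
    _ = 2 * ε := by field_simp; norm_num
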